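/- Let f : S → ℂ be a solution of the integral Kannappan equation. Then for all x ∈ S, Σ_{i∈I} Σ_{j∈I} c_i c_j f(x τ(z_i) z_j) = f(x) · Σ_{i∈I} c_i f(z_i) and Σ_{i∈I} Σ_{j∈I} c_i c_j f(x z_i z_j) = f(x) · Σ_{i∈I} c_i f(z_i). -/

import Mathlib

/-!
Write `F x = ∫ f (x t) dμ(t)`, `B x = ∫ F (x t) dμ(t)` and `A x = ∫ F (x τ(t)) dμ(t)`; the two
double sums are `B` and `A`. Putting `y = t` in the equation and integrating gives
`A + B = 2 m f` with `m = ∫ f dμ`, so it is enough to prove `A = B`.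

Both `f` and `A` are `τ`-invariant, hence so is `D = B - A`. Integrating the equation once in `x`
and once in `y` gives `D (x τ(y)) = 2 (F x f y - f x F y)`. Swapping `x` and `y` changes the sign of
the right side but fixes the left side, because `τ(x τ(y)) = y τ(x)`. So both sides vanish: `F` is
proportional to `f`, and then `A` and `B` are proportional to `f` with the same factor.
-/

section WeightedTranslate

variable {S ι κ R : Type*} [Semigroup S] [CommSemiring R]
  {I : Finset ι} {c : ι → R} {z : ι → S} {J : Finset κ} {d : κ → R} {w : κ → S}

/-- The function `x ↦ ∫ g (x t) dμ(t)`, where `μ = ∑ i ∈ I, c i δ_{z i}`. -/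
def weightedTranslate (I : Finset ι) (c : ι → R) (z : ι → S) (g : S → R) (x : S) : R :=
  ∑ i ∈ I, c i * g (x * z i)

theorem weightedTranslate_comm (hw : ∀ j ∈ J, w j ∈ Set.center S) (g : S → R) (x : S) :
    weightedTranslate J d w (weightedTranslate I c z g) x =
      weightedTranslate I c z (weightedTranslate J d w g) x := by
  simp only [weightedTranslate, Finset.mul_sum]
  rw [Finset.sum_comm]
  refine Finset.sum_congr rfl fun i _ => Finset.sum_congr rfl fun j hj => ?_
  rw [mul_assoc x, ← Semigroup.mem_center_iff.1 (hw j hj), ← mul_assoc x, mul_left_comm]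

theorem weightedTranslate_star_apply [StarMul S] (hz : ∀ i ∈ I, z i ∈ Set.center S)
    (g : S → R) (x : S) :
    weightedTranslate I c z g (star x) =
      weightedTranslate I c (star z) (fun s => g (star s)) x := by
  refine Finset.sum_congr rfl fun i hi => ?_
  have hstar : star (x * star (z i)) = star x * z i := by
    rw [star_mul, star_star, Semigroup.mem_center_iff.1 (hz i hi)]
  simp only [Pi.star_apply, hstar]

/-- The integral Kannappan equation `∫ f (x y t) dμ(t) + ∫ f (x τ(y) t) dμ(t) = 2 f(x) f(y)` for
the measure `μ = ∑ i ∈ I, c i δ_{z i}`, with the involution `τ` written as `star`. -/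
def IsIntegralKannappan [Star S] (I : Finset ι) (c : ι → R) (z : ι → S) (f : S → R) : Prop :=
  ∀ x y, weightedTranslate I c z f (x * y) + weightedTranslate I c z f (x * star y) =
    2 * f x * f y

end WeightedTranslate

namespace IsIntegralKannappan

section CommSemiring

variable {S ι κ R : Type*} [Semigroup S] [CommSemiring R]
  {I : Finset ι} {c : ι → R} {z : ι → S} {J : Finset κ} {w : κ → S} {f : S → R}

theorem weightedTranslate_left [Star S] (h : IsIntegralKannappan I c z f)
    (hw : ∀ j ∈ J, w j ∈ Set.center S) (d : κ → R) (x y : S) :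
    weightedTranslate J d w (weightedTranslate I c z f) (x * y) +
        weightedTranslate J d w (weightedTranslate I c z f) (x * star y) =
      2 * weightedTranslate J d w f x * f y := by
  rw [weightedTranslate, weightedTranslate, weightedTranslate,
    ← Finset.sum_add_distrib, Finset.mul_sum, Finset.sum_mul]
  refine Finset.sum_congr rfl fun j hj => ?_
  have hcomm (s : S) : x * s * w j = x * w j * s := by
    rw [mul_assoc, Semigroup.mem_center_iff.1 (hw j hj), mul_assoc]
  rw [hcomm, hcomm, ← mul_add, h]
  ring

theorem weightedTranslate_right [StarMul S] (h : IsIntegralKannappan I c z f)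
    (hw : ∀ j ∈ J, w j ∈ Set.center S) (d : κ → R) (x y : S) :
    weightedTranslate J d w (weightedTranslate I c z f) (x * y) +
        weightedTranslate J d (star w) (weightedTranslate I c z f) (x * star y) =
      2 * f x * weightedTranslate J d w f y := by
  rw [weightedTranslate, weightedTranslate, weightedTranslate,
    ← Finset.sum_add_distrib, Finset.mul_sum]
  refine Finset.sum_congr rfl fun j hj => ?_
  have hstar : star y * star (w j) = star (y * w j) := by
    rw [← star_mul, Semigroup.mem_center_iff.1 (hw j hj)]
  rw [Pi.star_apply, mul_assoc x, mul_assoc x, hstar, ← mul_add, h]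
  ring

theorem weightedTranslate_star_add_weightedTranslate [Star S]
    (h : IsIntegralKannappan I c z f) (J : Finset κ) (d : κ → R) (w : κ → S) (x : S) :
    weightedTranslate J d (star w) (weightedTranslate I c z f) x +
        weightedTranslate J d w (weightedTranslate I c z f) x =
      2 * (f x * ∑ j ∈ J, d j * f (w j)) := by
  rw [weightedTranslate, weightedTranslate, ← Finset.sum_add_distrib, Finset.mul_sum,
    Finset.mul_sum]
  refine Finset.sum_congr rfl fun j _ => ?_
  rw [Pi.star_apply, ← mul_add, add_comm, h]
  ring

end CommSemiring

section NoZeroDivisors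

variable {S ι R : Type*} [Semigroup S] [CommRing R] [NoZeroDivisors R] [NeZero (2 : R)]
  {I : Finset ι} {c : ι → R} {z : ι → S} {f : S → R}

theorem apply_star [InvolutiveStar S] (h : IsIntegralKannappan I c z f) (y : S) :
    f (star y) = f y := by
  have hmul (x : S) : f x * f (star y) = f x * f y := by
    have hstar := h x (star y)
    rw [star_star] at hstar
    refine mul_left_cancel₀ (two_ne_zero (α := R)) ?_
    linear_combination h x y - hstar
  have hsq : (f (star y) - f y) ^ 2 = 0 := by
    linear_combination hmul (star y) - hmul y
  exact sub_eq_zero.1 (pow_eq_zero_iff two_ne_zero |>.1 hsq)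

variable [StarMul S]

theorem weightedTranslate_apply_star (h : IsIntegralKannappan I c z f)
    (hz : ∀ i ∈ I, z i ∈ Set.center S) (x : S) :
    weightedTranslate I c z f (star x) = weightedTranslate I c (star z) f x := by
  simp only [weightedTranslate_star_apply hz, h.apply_star]

theorem weightedTranslate_star_weightedTranslate_apply_star (h : IsIntegralKannappan I c z f)
    (hz : ∀ i ∈ I, z i ∈ Set.center S) (x : S) :
    weightedTranslate I c (star z) (weightedTranslate I c z f) (star x) =
      weightedTranslate I c (star z) (weightedTranslate I c z f) x := by
  have hz_star : ∀ i ∈ I, star z i ∈ Set.center S := fun i hi => Set.star_mem_center (hz i hi)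
  simp only [weightedTranslate_star_apply hz_star, star_star, h.weightedTranslate_apply_star hz]
  exact weightedTranslate_comm hz f x

theorem weightedTranslate_weightedTranslate_apply_star (h : IsIntegralKannappan I c z f)
    (hz : ∀ i ∈ I, z i ∈ Set.center S) (x : S) :
    weightedTranslate I c z (weightedTranslate I c z f) (star x) =
      weightedTranslate I c z (weightedTranslate I c z f) x := by
  have hsum_star := h.weightedTranslate_star_add_weightedTranslate I c z (star x)
  rw [h.apply_star, h.weightedTranslate_star_weightedTranslate_apply_star hz,
    ← h.weightedTranslate_star_add_weightedTranslate] at hsum_star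
  exact add_left_cancel hsum_star

theorem weightedTranslate_mul_eq_mul_weightedTranslate (h : IsIntegralKannappan I c z f)
    (hz : ∀ i ∈ I, z i ∈ Set.center S) (x y : S) :
    weightedTranslate I c z f x * f y = f x * weightedTranslate I c z f y := by
  set F := weightedTranslate I c z f
  set A := weightedTranslate I c (star z) F
  set B := weightedTranslate I c z F
  have hdiff (x y : S) : B (x * star y) - A (x * star y) = 2 * (F x * f y - f x * F y) := by
    linear_combination h.weightedTranslate_left hz c x y - h.weightedTranslate_right hz c x y
  have hswap : B (y * star x) - A (y * star x) = B (x * star y) - A (x * star y) := by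
    have hstar : star (x * star y) = y * star x := by rw [star_mul, star_star]
    have hA := h.weightedTranslate_star_weightedTranslate_apply_star hz (x * star y)
    have hB := h.weightedTranslate_weightedTranslate_apply_star hz (x * star y)
    rw [hstar] at hA hB
    exact congrArg₂ (· - ·) hB hA
  refine mul_left_cancel₀ (two_ne_zero (α := R)) (mul_left_cancel₀ (two_ne_zero (α := R)) ?_)
  linear_combination -hswap - hdiff x y + hdiff y x

theorem weightedTranslate_weightedTranslate_mul (h : IsIntegralKannappan I c z f)
    (hz : ∀ i ∈ I, z i ∈ Set.center S) {κ : Type*} (J : Finset κ) (d : κ → R) (w : κ → S)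
    (x y : S) :
    weightedTranslate J d w (weightedTranslate I c z f) x * f y =
      weightedTranslate J d w f x * weightedTranslate I c z f y := by
  rw [weightedTranslate, weightedTranslate, Finset.sum_mul, Finset.sum_mul]
  simp only [mul_assoc, h.weightedTranslate_mul_eq_mul_weightedTranslate hz]

theorem weightedTranslate_star_weightedTranslate (h : IsIntegralKannappan I c z f)
    (hz : ∀ i ∈ I, z i ∈ Set.center S) (x : S) :
    weightedTranslate I c (star z) (weightedTranslate I c z f) x =
      weightedTranslate I c z (weightedTranslate I c z f) x := by
  by_cases hf : f = 0
  · simp [hf, weightedTranslate]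
  obtain ⟨a, ha⟩ := Function.ne_iff.1 hf
  have heven : weightedTranslate I c (star z) f x = weightedTranslate I c z f x := by
    refine mul_right_cancel₀ ha ?_
    rw [← h.weightedTranslate_apply_star hz, h.weightedTranslate_mul_eq_mul_weightedTranslate hz,
      h.apply_star, h.weightedTranslate_mul_eq_mul_weightedTranslate hz]
  refine mul_right_cancel₀ ha ?_
  rw [h.weightedTranslate_weightedTranslate_mul hz, h.weightedTranslate_weightedTranslate_mul hz,
    heven]

theorem weightedTranslate_weightedTranslate (h : IsIntegralKannappan I c z f)
    (hz : ∀ i ∈ I, z i ∈ Set.center S) (x : S) :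
    weightedTranslate I c z (weightedTranslate I c z f) x = f x * ∑ i ∈ I, c i * f (z i) := by
  have hsum := h.weightedTranslate_star_add_weightedTranslate I c z x
  rw [h.weightedTranslate_star_weightedTranslate hz, ← two_mul] at hsum
  exact mul_left_cancel₀ two_ne_zero hsum

end NoZeroDivisors

end IsIntegralKannappan

theorem stmt_14_general {S ι R : Type*} [Semigroup S] [StarMul S] [CommRing R] [NoZeroDivisors R]
    [NeZero (2 : R)] {I : Finset ι} {c : ι → R} {z : ι → S} {f : S → R}
    (hz : ∀ i ∈ I, z i ∈ Set.center S) (hK : IsIntegralKannappan I c z f) (x : S) :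
    (∑ i ∈ I, ∑ j ∈ I, c i * c j * f (x * star (z i) * z j)) = f x * ∑ i ∈ I, c i * f (z i) ∧
      (∑ i ∈ I, ∑ j ∈ I, c i * c j * f (x * z i * z j)) = f x * ∑ i ∈ I, c i * f (z i) := by
  have hexpand (w : ι → S) : ∑ i ∈ I, ∑ j ∈ I, c i * c j * f (x * w i * z j) =
      weightedTranslate I c w (weightedTranslate I c z f) x := by
    simp only [weightedTranslate, Finset.mul_sum, mul_assoc]
  have hB := hK.weightedTranslate_weightedTranslate hz x
  exact ⟨(hexpand (star z)).trans ((hK.weightedTranslate_star_weightedTranslate hz x).trans hB),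
    (hexpand z).trans hB⟩

theorem stmt_14 {S ι : Type*} [Semigroup S] (τ : S → S)
    (hτmul : ∀ x y : S, τ (x * y) = τ y * τ x)
    (hτinv : ∀ x : S, τ (τ x) = x)
    (I : Finset ι) (c : ι → ℂ) (z : ι → S)
    (hz : ∀ i ∈ I, ∀ s : S, z i * s = s * z i)
    (f : S → ℂ)
(hK : ∀ x y : S,
      (∑ i ∈ I, c i * f (x * y * z i)) + (∑ i ∈ I, c i * f (x * τ y * z i))
        = 2 * f x * f y) :
    ∀ x : S,
      (∑ i ∈ I, ∑ j ∈ I, c i * c j * f (x * τ (z i) * z j))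
        = f x * ∑ i ∈ I, c i * f (z i) ∧
      (∑ i ∈ I, ∑ j ∈ I, c i * c j * f (x * z i * z j))
        = f x * ∑ i ∈ I, c i * f (z i) := by
  let _ : StarMul S := { star := τ, star_involutive := hτinv, star_mul := hτmul }
  exact stmt_14_general (fun i hi => Semigroup.mem_center_iff.2 fun s => (hz i hi s).symm) hK
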